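/- Let n ≥ 1, x ∈ ℝⁿ, and y ∈ ℝⁿ with y_i ≥ 0 for all i and y ≠ 0. Then ln( Σ_{i=1}^n e^{x_i} y_i ) = inf { Σ_{i=1}^n f_i y_i + t : (f, t, u) ∈ ℝⁿ × ℝ × ℝ, f_i ≥ e^{x_i + u} for all i, and t ≥ −u − 1 }. -/

import Mathlib

/-! Since `v + 1 ≤ exp v`, with equality at `v = 0`, the choice `v = log z + u` shows that `log z`
is the minimum over `u` of `z * exp u - u - 1`. For `z = ∑ i, exp (x i) * y i` this objective is
`∑ i, exp (x i + u) * y i + (-u - 1)`; as the weights `y i` are nonnegative, replacing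
`exp (x i + u)` and `-u - 1` by upper bounds `f i` and `t` does not change the minimum. -/

theorem log_le_mul_exp_sub_sub_one {z : ℝ} (hz : 0 < z) (u : ℝ) :
    Real.log z ≤ z * Real.exp u - u - 1 := by
  have h : Real.log z + u + 1 ≤ z * Real.exp u := by
    simpa only [Real.exp_add, Real.exp_log hz] using Real.add_one_le_exp (Real.log z + u)
  linarith

theorem isLeast_range_mul_exp_sub_sub_one {z : ℝ} (hz : 0 < z) :
    IsLeast (Set.range fun u : ℝ ↦ z * Real.exp u - u - 1) (Real.log z) := by
  refine ⟨⟨-Real.log z, ?_⟩, Set.forall_mem_range.2 (log_le_mul_exp_sub_sub_one hz)⟩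
  simp only [Real.exp_neg, Real.exp_log hz, mul_inv_cancel₀ hz.ne']
  ring

section WeightedSums

variable {ι : Type*}

theorem sum_mul_pos_of_pos_of_nonneg_of_ne_zero [Fintype ι] {R : Type*} [Semiring R]
    [PartialOrder R] [IsStrictOrderedRing R] {w y : ι → R} (hw : ∀ i, 0 < w i)
    (hy : ∀ i, 0 ≤ y i) (hy0 : y ≠ 0) : 0 < ∑ i, w i * y i := by
  obtain ⟨j, hj⟩ := Function.ne_iff.1 hy0
  exact Finset.sum_pos' (fun i _ ↦ mul_nonneg (hw i).le (hy i))
    ⟨j, Finset.mem_univ j, mul_pos (hw j) ((hy j).lt_of_ne' hj)⟩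

theorem sum_exp_add_mul (s : Finset ι) (x y : ι → ℝ) (u : ℝ) :
    ∑ i ∈ s, Real.exp (x i + u) * y i = (∑ i ∈ s, Real.exp (x i) * y i) * Real.exp u := by
  simp only [Real.exp_add, Finset.sum_mul, mul_right_comm]

theorem sum_exp_mul_mul_exp_sub_sub_one_le {s : Finset ι} {x y f : ι → ℝ} {t u : ℝ}
    (hy : ∀ i ∈ s, 0 ≤ y i) (hf : ∀ i ∈ s, Real.exp (x i + u) ≤ f i) (ht : -u - 1 ≤ t) :
    (∑ i ∈ s, Real.exp (x i) * y i) * Real.exp u - u - 1 ≤ ∑ i ∈ s, f i * y i + t := by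
  have hsum : ∑ i ∈ s, Real.exp (x i + u) * y i ≤ ∑ i ∈ s, f i * y i :=
    Finset.sum_le_sum fun i hi ↦ mul_le_mul_of_nonneg_right (hf i hi) (hy i hi)
  rw [sum_exp_add_mul] at hsum
  linarith

end WeightedSums

theorem stmt_18_general {ι : Type*} [Fintype ι] (x y : ι → ℝ)
    (hy : ∀ i, 0 ≤ y i) (hy0 : y ≠ 0) :
    IsLeast {z : ℝ | ∃ (f : ι → ℝ) (t u : ℝ),
        z = ∑ i, f i * y i + t ∧ (∀ i, Real.exp (x i + u) ≤ f i) ∧ -u - 1 ≤ t}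
      (Real.log (∑ i, Real.exp (x i) * y i)) := by
  have hpos : 0 < ∑ i, Real.exp (x i) * y i :=
    sum_mul_pos_of_pos_of_nonneg_of_ne_zero (fun i ↦ Real.exp_pos (x i)) hy hy0
  obtain ⟨⟨u, hu⟩, hmin⟩ := isLeast_range_mul_exp_sub_sub_one hpos
  constructor
  · refine ⟨fun i ↦ Real.exp (x i + u), -u - 1, u, ?_, fun _ ↦ le_rfl, le_rfl⟩
    rw [← hu, sum_exp_add_mul]
    ring
  · rintro _ ⟨f, t, v, rfl, hf, ht⟩
    exact (hmin ⟨v, rfl⟩).trans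
      (sum_exp_mul_mul_exp_sub_sub_one_le (fun i _ ↦ hy i) (fun i _ ↦ hf i) ht)

theorem stmt_18 {n : ℕ} (hn : 1 ≤ n) (x y : Fin n → ℝ)
    (hy : ∀ i, 0 ≤ y i) (hy0 : y ≠ 0) :
    Real.log (∑ i, Real.exp (x i) * y i) =
      sInf {z : ℝ | ∃ (f : Fin n → ℝ) (t u : ℝ),
        z = ∑ i, f i * y i + t ∧ (∀ i, Real.exp (x i + u) ≤ f i) ∧ -u - 1 ≤ t} :=
  (stmt_18_general x y hy hy0).csInf_eq.symm
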